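/- Fix an integer d ≥ 1 and δ ∈ (0,1). Let a^{jk} : ℝ → ℝ (1 ≤ j,k ≤ d) be measurable functions of x¹ only, with a^{jk} = a^{kj} and δ|θ|² ≤ Σ_{j,k=1}^d a^{jk}(x¹) θ^j θ^k ≤ δ⁻¹|θ|² for all x¹ ∈ ℝ and θ ∈ ℝ^d. Set L₀u = u_t + Σ_{j,k} a^{jk}(x¹) u_{x^j x^k}. Then there exists N = N(d,δ) such that for every r > 0 and every u that is smooth on an open neighborhood of the closure of Q_r and vanishes on the parabolic boundary ∂'Q_r = ([0,r²] × ∂B_r) ∪ ({r²} × B_r), one has r² ∫_{Q_r} |u_x|² dx dt + ∫_{Q_r} |u|² dx dt ≤ N r⁴ ∫_{Q_r} |L₀u|² dx dt. -/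

import Mathlib

open MeasureTheory

/-- Partial derivative in `t`. -/
noncomputable def pdt {d : ℕ} (u : ℝ × (Fin d → ℝ) → ℝ) : ℝ × (Fin d → ℝ) → ℝ :=
  fun p => fderiv ℝ u p (1, 0)

/-- Partial derivative in `x^j`. -/
noncomputable def pdx {d : ℕ} (j : Fin d) (u : ℝ × (Fin d → ℝ) → ℝ) :
    ℝ × (Fin d → ℝ) → ℝ :=
  fun p => fderiv ℝ u p (0, Pi.single j 1)

/-- Second partial derivative in `x^j, x^k`. -/
noncomputable def pdxx {d : ℕ} (j k : Fin d) (u : ℝ × (Fin d → ℝ) → ℝ) :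
    ℝ × (Fin d → ℝ) → ℝ :=
  pdx j (pdx k u)

/-- Open Euclidean ball `B_r ⊂ ℝ^d` centered at the origin. -/
def ballE (d : ℕ) (r : ℝ) : Set (Fin d → ℝ) := {x | ∑ j, (x j) ^ 2 < r ^ 2}

/-- Euclidean sphere `∂B_r ⊂ ℝ^d` centered at the origin. -/
def sphereE (d : ℕ) (r : ℝ) : Set (Fin d → ℝ) := {x | ∑ j, (x j) ^ 2 = r ^ 2}

/-- Parabolic cylinder `Q_r = (0,r²) × B_r`. -/
def Qc (d : ℕ) (r : ℝ) : Set (ℝ × (Fin d → ℝ)) := Set.Ioo 0 (r ^ 2) ×ˢ ballE d r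

/-- Parabolic boundary `∂'Q_r = ([0,r²] × ∂B_r) ∪ ({r²} × B_r)`. -/
def pbQc (d : ℕ) (r : ℝ) : Set (ℝ × (Fin d → ℝ)) :=
  (Set.Icc 0 (r ^ 2) ×ˢ sphereE d r) ∪ (({r ^ 2} : Set ℝ) ×ˢ ballE d r)

/-!
Test `L₀u` against `u / a^{11}(x¹)`. In the resulting energy identity the coefficient of `u_{11}`
is the constant `1`, while every other coefficient `a^{jk} / a^{11}` is independent of `x^j` or of
`x^k`; since `u_{jk} = u_{kj}`, one can always integrate by parts in a direction that does not see
the coefficient, so no regularity of `a` is needed. The weight `1 / a^{11}` does not depend on `t`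
and `u` vanishes at `t = r²`, so the `u u_t` term has a favourable sign. Ellipticity then bounds
`∫ |u_x|²` by `ε ∫ u²` plus a multiple of `∫ |L₀u|²`, and Poincaré's inequality absorbs `ε ∫ u²`.
-/

open Function Set

section Integration

lemma memLp_bdd_mul_of_isCompact_closure {X : Type*} [TopologicalSpace X] [MeasurableSpace X]
    [OpensMeasurableSpace X] [TopologicalSpace.PseudoMetrizableSpace X]
    {μ : Measure X} [IsFiniteMeasureOnCompacts μ] {s : Set X} (hs : IsCompact (closure s))
    {w h : X → ℝ} (hw : Measurable w) {C : ℝ} (hwC : ∀ x, |w x| ≤ C)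
    (hh : ContinuousOn h (closure s)) (p : ENNReal) :
    MemLp (fun x => w x * h x) p (μ.restrict s) := by
  suffices MemLp (fun x => w x * h x) p (μ.restrict (closure s)) from
    this.mono_measure (Measure.restrict_mono subset_closure le_rfl)
  have : IsFiniteMeasure (μ.restrict (closure s)) := ⟨by simpa using hs.measure_lt_top⟩
  obtain ⟨M, hM⟩ := hs.exists_bound_of_continuousOn hh
  refine MemLp.of_bound (hw.aestronglyMeasurable.mul
    (hh.aestronglyMeasurable_of_isCompact hs isClosed_closure.measurableSet)) (C * M) ?_
  filter_upwards [ae_restrict_mem isClosed_closure.measurableSet] with x hx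
  rw [norm_mul]
  exact mul_le_mul (hwC x) (hM x hx) (norm_nonneg _) ((abs_nonneg _).trans (hwC x))

lemma integral_eq_zero_of_forall_integral_update_eq_zero {E : Type*} [NormedAddCommGroup E]
    [NormedSpace ℝ E] {d : ℕ} (j : Fin d) {F : (Fin d → ℝ) → E}
    (hF : ∀ x, ∫ s, F (update x j s) = 0) : ∫ x, F x = 0 := by
  obtain ⟨n, rfl⟩ : ∃ n, d = n + 1 := ⟨d - 1, by have := j.pos; omega⟩
  have split := (volume_preserving_piFinSuccAbove (fun _ : Fin (n + 1) => ℝ) j).symm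
  by_cases hint : Integrable F
  swap
  · exact integral_undef hint
  rw [← split.integral_comp', Measure.volume_eq_prod, integral_prod_symm]
  · refine integral_eq_zero_of_ae (.of_forall fun z => ?_)
    have hz := hF (j.insertNth 0 z)
    simp only [Fin.update_insertNth] at hz
    exact hz
  · exact split.integrable_comp_emb (MeasurableEquiv.measurableEmbedding _) |>.2 hint

end Integration

section PartialDerivatives

variable {d : ℕ} {u v : ℝ × (Fin d → ℝ) → ℝ} {U : Set (ℝ × (Fin d → ℝ))} {p : ℝ × (Fin d → ℝ)}

lemma contDiffOn_pdx {m n : WithTop ℕ∞} (hU : IsOpen U) (hu : ContDiffOn ℝ n u U)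
    (hmn : m + 1 ≤ n) (j : Fin d) : ContDiffOn ℝ m (pdx j u) U :=
  (hu.fderiv_of_isOpen hU hmn).clm_apply contDiffOn_const

lemma continuousOn_pdx (hU : IsOpen U) (hu : ContDiffOn ℝ 1 u U) (j : Fin d) :
    ContinuousOn (pdx j u) U :=
  (contDiffOn_pdx (m := 0) hU hu (by norm_num) j).continuousOn

lemma continuousOn_pdt (hU : IsOpen U) (hu : ContDiffOn ℝ 1 u U) : ContinuousOn (pdt u) U :=
  (hu.continuousOn_fderiv_of_isOpen hU le_rfl).clm_apply continuousOn_const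

lemma continuousOn_pdxx (hU : IsOpen U) (hu : ContDiffOn ℝ 2 u U) (j k : Fin d) :
    ContinuousOn (pdxx j k u) U :=
  continuousOn_pdx hU (contDiffOn_pdx hU hu (by norm_num) k) j

lemma pdx_mul (j : Fin d) (hu : DifferentiableAt ℝ u p) (hv : DifferentiableAt ℝ v p) :
    pdx j (fun q => u q * v q) p = u p * pdx j v p + v p * pdx j u p := by
  simp [pdx, fderiv_fun_mul hu hv]

lemma pdt_mul (hu : DifferentiableAt ℝ u p) (hv : DifferentiableAt ℝ v p) :
    pdt (fun q => u q * v q) p = u p * pdt v p + v p * pdt u p := by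
  simp [pdt, fderiv_fun_mul hu hv]

lemma pdx_coord_self (j : Fin d) : pdx j (fun q => q.2 j) p = 1 := by
  have hcoord : HasFDerivAt (fun q : ℝ × (Fin d → ℝ) => q.2 j)
      ((ContinuousLinearMap.proj j).comp (ContinuousLinearMap.snd ℝ ℝ (Fin d → ℝ))) p :=
    ((ContinuousLinearMap.proj (R := ℝ) (φ := fun _ : Fin d => ℝ) j).comp
      (ContinuousLinearMap.snd ℝ ℝ (Fin d → ℝ))).hasFDerivAt
  simp [pdx, hcoord.fderiv]

lemma pdxx_comm (hu : ContDiffAt ℝ 2 u p) (j k : Fin d) : pdxx j k u p = pdxx k j u p := by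
  have hdiff : DifferentiableAt ℝ (fderiv ℝ u) p :=
    (hu.fderiv_right (m := 1) (by norm_num)).differentiableAt one_ne_zero
  have pdxx_eq (j k : Fin d) : pdxx j k u p =
      fderiv ℝ (fderiv ℝ u) p (0, Pi.single j 1) (0, Pi.single k 1) := by
    unfold pdxx pdx
    rw [fderiv_clm_apply hdiff (differentiableAt_const _)]
    simp
  rw [pdxx_eq, pdxx_eq]
  exact (hu.isSymmSndFDerivAt (by simp)).eq _ _

lemma hasDerivAt_update_pdx {j : Fin d} {t : ℝ} {x : Fin d → ℝ}
    (hu : DifferentiableAt ℝ u (t, x)) :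
    HasDerivAt (fun s => u (t, update x j s)) (pdx j u (t, x)) (x j) := by
  have hline : HasDerivAt (fun s => (t, update x j s)) (0, Pi.single j 1) (x j) :=
    (hasDerivAt_const _ t).prodMk (hasDerivAt_update x j _)
  refine HasFDerivAt.comp_hasDerivAt (x j) ?_ hline
  simpa using hu.hasFDerivAt

lemma hasDerivAt_pdt {t : ℝ} {x : Fin d → ℝ} (hu : DifferentiableAt ℝ u (t, x)) :
    HasDerivAt (fun s => u (s, x)) (pdt u (t, x)) t :=
  hu.hasFDerivAt.comp_hasDerivAt t ((hasDerivAt_id t).prodMk (hasDerivAt_const t x))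

end PartialDerivatives

section Cylinder

variable {d : ℕ} {r : ℝ}

/-- The closed Euclidean ball of radius `r` centered at the origin, written in coordinates like
`ballE` because `Fin d → ℝ` carries the sup norm. -/
def closedBallE (d : ℕ) (r : ℝ) : Set (Fin d → ℝ) := {x | ∑ j, (x j) ^ 2 ≤ r ^ 2}

lemma ballE_subset_closedBallE : ballE d r ⊆ closedBallE d r :=
  fun x hx => (show ∑ j, (x j) ^ 2 < r ^ 2 from hx).le

lemma closure_ballE (hr : 0 < r) : closure (ballE d r) = closedBallE d r := by
  have hball : ballE d r = (PiLp.homeomorph 2 fun _ : Fin d => ℝ).symm ⁻¹' Metric.ball 0 r := by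
    rw [EuclideanSpace.ball_zero_eq r hr.le]; rfl
  have hclosedBall : closedBallE d r =
      (PiLp.homeomorph 2 fun _ : Fin d => ℝ).symm ⁻¹' Metric.closedBall 0 r := by
    rw [EuclideanSpace.closedBall_zero_eq r hr.le]; rfl
  rw [hball, hclosedBall, ← Homeomorph.preimage_closure]
  congr
  exact closure_ball 0 hr.ne'

lemma isOpen_ballE : IsOpen (ballE d r) := isOpen_lt (by fun_prop) continuous_const

lemma measurableSet_Qc : MeasurableSet (Qc d r) :=
  measurableSet_Ioo.prod isOpen_ballE.measurableSet

lemma closure_Qc (hr : 0 < r) : closure (Qc d r) = Icc 0 (r ^ 2) ×ˢ closedBallE d r := by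
  rw [Qc, closure_prod_eq, closure_Ioo (by positivity), closure_ballE hr]

lemma sq_apply_le_of_mem_closedBallE {x : Fin d → ℝ} (hx : x ∈ closedBallE d r) (j : Fin d) :
    (x j) ^ 2 ≤ r ^ 2 :=
  (Finset.single_le_sum (f := fun i => (x i) ^ 2) (fun _ _ => sq_nonneg _)
    (Finset.mem_univ j)).trans hx

lemma isCompact_closure_Qc (hr : 0 < r) : IsCompact (closure (Qc d r)) := by
  have hbox : IsCompact (Icc 0 (r ^ 2) ×ˢ univ.pi fun _ : Fin d => Icc (-r) r) :=
    isCompact_Icc.prod (isCompact_univ_pi fun _ => isCompact_Icc)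
  refine hbox.of_isClosed_subset isClosed_closure ?_
  rw [closure_Qc hr]
  exact prod_mono_right fun x hx j _ =>
    abs_le.1 (abs_le_of_sq_le_sq (sq_apply_le_of_mem_closedBallE hx j) hr.le)

lemma memLp_bdd_mul_Qc (hr : 0 < r) {w : (Fin d → ℝ) → ℝ} (hw : Measurable w) {C : ℝ}
    (hwC : ∀ x, |w x| ≤ C) {h : ℝ × (Fin d → ℝ) → ℝ} (hh : ContinuousOn h (closure (Qc d r)))
    (p : ENNReal) : MemLp (fun q => w q.2 * h q) p (volume.restrict (Qc d r)) :=
  memLp_bdd_mul_of_isCompact_closure (isCompact_closure_Qc hr) (hw.comp measurable_snd)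
    (fun q => hwC q.2) hh p

lemma integrableOn_bdd_mul_Qc (hr : 0 < r) {w : (Fin d → ℝ) → ℝ} (hw : Measurable w) {C : ℝ}
    (hwC : ∀ x, |w x| ≤ C) {h : ℝ × (Fin d → ℝ) → ℝ} (hh : ContinuousOn h (closure (Qc d r))) :
    IntegrableOn (fun q => w q.2 * h q) (Qc d r) :=
  memLp_one_iff_integrable.1 (memLp_bdd_mul_Qc hr hw hwC hh 1)

lemma integrableOn_Qc (hr : 0 < r) {h : ℝ × (Fin d → ℝ) → ℝ}
    (hh : ContinuousOn h (closure (Qc d r))) : IntegrableOn h (Qc d r) :=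
  (hh.integrableOn_compact (isCompact_closure_Qc hr)).mono_set subset_closure

end Cylinder

section IntegrationByParts

variable {d : ℕ} {r : ℝ}

lemma sum_update_sq (x : Fin d → ℝ) (j : Fin d) (s : ℝ) :
    ∑ i, (update x j s i) ^ 2 = s ^ 2 + ∑ i ∈ Finset.univ.erase j, (x i) ^ 2 := by
  rw [← Finset.add_sum_erase _ _ (Finset.mem_univ j), update_self]
  congr 1
  exact Finset.sum_congr rfl fun i hi => by rw [update_of_ne (Finset.ne_of_mem_erase hi)]

lemma update_mem_ballE_iff {x : Fin d → ℝ} {j : Fin d} {s : ℝ} :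
    update x j s ∈ ballE d r ↔
      |s| < √(r ^ 2 - ∑ i ∈ Finset.univ.erase j, (x i) ^ 2) := by
  rw [Real.lt_sqrt (abs_nonneg s), sq_abs, lt_sub_iff_add_lt, ← sum_update_sq, ballE, mem_ofPred_eq]

lemma intervalIntegral_update_eq_zero {j : Fin d} {f f' : (Fin d → ℝ) → ℝ}
    (hf : ∀ x ∈ closedBallE d r, HasDerivAt (fun s => f (update x j s)) (f' x) (x j))
    (hf' : ContinuousOn f' (closedBallE d r)) (hf0 : ∀ x ∈ sphereE d r, f x = 0)
    {x : Fin d → ℝ} {ρ : ℝ} (hρ : 0 ≤ ρ)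
    (hx : ρ ^ 2 + ∑ i ∈ Finset.univ.erase j, (x i) ^ 2 = r ^ 2) :
    ∫ s in -ρ..ρ, f' (update x j s) = 0 := by
  have hmem : ∀ s ∈ uIcc (-ρ) ρ, update x j s ∈ closedBallE d r := by
    intro s hs
    rw [uIcc_of_le (by linarith), mem_Icc, ← abs_le] at hs
    rw [closedBallE, mem_ofPred_eq, sum_update_sq, ← hx]
    gcongr ?_ + _
    exact sq_le_sq.2 (hs.trans (le_abs_self ρ))
  have hendpoint : ∀ s, s ^ 2 = ρ ^ 2 → f (update x j s) = 0 := fun s hs =>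
    hf0 _ (by rw [sphereE, mem_ofPred_eq, sum_update_sq, hs, hx])
  rw [intervalIntegral.integral_eq_sub_of_hasDerivAt (f := fun s => f (update x j s)),
    hendpoint ρ rfl, hendpoint (-ρ) (neg_sq ρ), sub_zero]
  · intro s hs
    simpa only [update_idem, update_self] using hf _ (hmem s hs)
  · exact (hf'.comp (by fun_prop) hmem).intervalIntegrable

lemma setIntegral_ballE_mul_eq_zero {j : Fin d} {f f' w : (Fin d → ℝ) → ℝ}
    (hf : ∀ x ∈ closedBallE d r, HasDerivAt (fun s => f (update x j s)) (f' x) (x j))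
    (hf' : ContinuousOn f' (closedBallE d r)) (hf0 : ∀ x ∈ sphereE d r, f x = 0)
    (hw : ∀ x s, w (update x j s) = w x) :
    ∫ x in ballE d r, w x * f' x = 0 := by
  rw [← integral_indicator isOpen_ballE.measurableSet]
  refine integral_eq_zero_of_forall_integral_update_eq_zero j fun x => ?_
  set c := r ^ 2 - ∑ i ∈ Finset.univ.erase j, (x i) ^ 2 with hc
  have hslice (s : ℝ) : (ballE d r).indicator (fun y => w y * f' y) (update x j s) =
      (Ioo (-√c) √c).indicator (fun s => w x * f' (update x j s)) s := by
    classical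
    simp only [indicator_apply, update_mem_ballE_iff, ← hc, mem_Ioo, ← abs_lt, hw]
  simp_rw [hslice]
  rw [integral_indicator measurableSet_Ioo]
  rcases le_or_gt c 0 with hc0 | hc0
  · simp [Real.sqrt_eq_zero_of_nonpos hc0]
  rw [integral_const_mul, ← integral_Ioc_eq_integral_Ioo,
    ← intervalIntegral.integral_of_le (by linarith [Real.sqrt_nonneg c]),
    intervalIntegral_update_eq_zero hf hf' hf0 (Real.sqrt_nonneg c), mul_zero]
  rw [Real.sq_sqrt hc0.le, hc, sub_add_cancel]

variable {u v : ℝ × (Fin d → ℝ) → ℝ} {U : Set (ℝ × (Fin d → ℝ))} {w : (Fin d → ℝ) → ℝ} {C : ℝ}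

lemma setIntegral_Qc_mul_pdx_eq_zero (hr : 0 < r) (hU : IsOpen U) (hQ : closure (Qc d r) ⊆ U)
    (hu : ContDiffOn ℝ 1 u U) (hu0 : ∀ p ∈ Icc 0 (r ^ 2) ×ˢ sphereE d r, u p = 0)
    (hwm : Measurable w) (hwC : ∀ x, |w x| ≤ C) {j : Fin d} (hw : ∀ x s, w (update x j s) = w x) :
    ∫ p in Qc d r, w p.2 * pdx j u p = 0 := by
  have hcont := (continuousOn_pdx hU hu j).mono hQ
  have hint := integrableOn_bdd_mul_Qc hr hwm hwC hcont
  rw [closure_Qc hr] at hQ hcont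
  rw [Qc, Measure.volume_eq_prod] at hint ⊢
  rw [setIntegral_prod _ hint]
  refine setIntegral_eq_zero_of_forall_eq_zero fun t ht => ?_
  have ht' := Ioo_subset_Icc_self ht
  refine setIntegral_ballE_mul_eq_zero (f := fun x => u (t, x)) (fun x hx => ?_)
    (hcont.comp (by fun_prop) fun x hx => ⟨ht', hx⟩) (fun x hx => hu0 _ ⟨ht', hx⟩) hw
  exact hasDerivAt_update_pdx
    ((hu.contDiffAt (hU.mem_nhds (hQ ⟨ht', hx⟩))).differentiableAt one_ne_zero)

lemma setIntegral_Qc_mul_pdt_nonpos (hr : 0 < r) (hU : IsOpen U) (hQ : closure (Qc d r) ⊆ U)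
    (hu : ContDiffOn ℝ 1 u U) (hu_top : ∀ x ∈ ballE d r, u (r ^ 2, x) = 0)
    (hu_bot : ∀ x ∈ ballE d r, 0 ≤ u (0, x))
    (hwm : Measurable w) (hwC : ∀ x, |w x| ≤ C) (hw : ∀ x, 0 ≤ w x) :
    ∫ p in Qc d r, w p.2 * pdt u p ≤ 0 := by
  have hcont := (continuousOn_pdt hU hu).mono hQ
  have hint := integrableOn_bdd_mul_Qc hr hwm hwC hcont
  rw [closure_Qc hr] at hQ hcont
  rw [IntegrableOn, Qc, Measure.volume_eq_prod, ← Measure.prod_restrict] at hint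
  rw [Qc, Measure.volume_eq_prod, ← Measure.prod_restrict, integral_prod_symm _ hint]
  refine setIntegral_nonpos isOpen_ballE.measurableSet fun x hx => ?_
  have hmem : ∀ s ∈ uIcc 0 (r ^ 2), (s, x) ∈ Icc 0 (r ^ 2) ×ˢ closedBallE d r := fun s hs =>
    ⟨uIcc_of_le (sq_nonneg r) ▸ hs, ballE_subset_closedBallE hx⟩
  have hftc : ∫ s in 0..r ^ 2, pdt u (s, x) = u (r ^ 2, x) - u (0, x) :=
    intervalIntegral.integral_eq_sub_of_hasDerivAt
      (fun s hs => hasDerivAt_pdt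
        ((hu.contDiffAt (hU.mem_nhds (hQ (hmem s hs)))).differentiableAt one_ne_zero))
      (hcont.comp (by fun_prop) hmem).intervalIntegrable
  calc ∫ s in Ioo 0 (r ^ 2), w x * pdt u (s, x) = w x * ∫ s in 0..r ^ 2, pdt u (s, x) := by
        rw [integral_const_mul, ← integral_Ioc_eq_integral_Ioo,
          intervalIntegral.integral_of_le (sq_nonneg r)]
    _ = w x * -u (0, x) := by rw [hftc, hu_top x hx, zero_sub]
    _ ≤ 0 := mul_nonpos_of_nonneg_of_nonpos (hw x) (neg_nonpos.2 (hu_bot x hx))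

lemma setIntegral_Qc_mul_pdx_mul_eq_zero (hr : 0 < r) (hU : IsOpen U) (hQ : closure (Qc d r) ⊆ U)
    (hu : ContDiffOn ℝ 1 u U) (hv : ContDiffOn ℝ 1 v U)
    (hu0 : ∀ p ∈ Icc 0 (r ^ 2) ×ˢ sphereE d r, u p = 0)
    (hwm : Measurable w) (hwC : ∀ x, |w x| ≤ C) {j : Fin d} (hw : ∀ x s, w (update x j s) = w x) :
    ∫ p in Qc d r, w p.2 * (u p * pdx j v p + v p * pdx j u p) = 0 := by
  rw [← setIntegral_Qc_mul_pdx_eq_zero hr hU hQ (hu.mul hv)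
    (fun p hp => by simp [hu0 p hp]) hwm hwC hw]
  refine setIntegral_congr_fun measurableSet_Qc fun p hp => ?_
  have hpU := hU.mem_nhds (hQ (subset_closure hp))
  rw [← pdx_mul j ((hu.contDiffAt hpU).differentiableAt one_ne_zero)
    ((hv.contDiffAt hpU).differentiableAt one_ne_zero)]

lemma setIntegral_Qc_mul_self_mul_pdt_nonpos (hr : 0 < r) (hU : IsOpen U)
    (hQ : closure (Qc d r) ⊆ U) (hu : ContDiffOn ℝ 1 u U)
    (hu_top : ∀ x ∈ ballE d r, u (r ^ 2, x) = 0)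
    (hwm : Measurable w) (hwC : ∀ x, |w x| ≤ C) (hw : ∀ x, 0 ≤ w x) :
    ∫ p in Qc d r, w p.2 * (u p * pdt u p) ≤ 0 := by
  have hsq : ∫ p in Qc d r, w p.2 * pdt (fun q => u q * u q) p =
      2 * ∫ p in Qc d r, w p.2 * (u p * pdt u p) := by
    rw [← integral_const_mul]
    refine setIntegral_congr_fun measurableSet_Qc fun p hp => ?_
    have hdiff := (hu.contDiffAt (hU.mem_nhds (hQ (subset_closure hp)))).differentiableAt
      one_ne_zero
    rw [pdt_mul hdiff hdiff]
    ring
  have hnonpos := setIntegral_Qc_mul_pdt_nonpos hr hU hQ (hu.mul hu)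
    (fun x hx => by simp [hu_top x hx]) (fun x _ => mul_self_nonneg (u (0, x))) hwm hwC hw
  linarith

end IntegrationByParts

section Poincare

variable {d : ℕ} {r : ℝ} {u : ℝ × (Fin d → ℝ) → ℝ} {U : Set (ℝ × (Fin d → ℝ))}

/- Integrating `∂_j (x^j u²) = u² + 2 x^j u u_j` over `Q_r` gives `0`, and Young's inequality
absorbs the cross term. -/
lemma poincare_Qc (hr : 0 < r) (hU : IsOpen U) (hQ : closure (Qc d r) ⊆ U)
    (hu : ContDiffOn ℝ 1 u U) (hu0 : ∀ p ∈ Icc 0 (r ^ 2) ×ˢ sphereE d r, u p = 0) (j : Fin d) :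
    ∫ p in Qc d r, (u p) ^ 2 ≤ 4 * r ^ 2 * ∫ p in Qc d r, (pdx j u p) ^ 2 := by
  have hcoord : ContDiff ℝ 1 fun p : ℝ × (Fin d → ℝ) => p.2 j := by fun_prop
  have hdiv : ∫ p in Qc d r, ((u p) ^ 2 + 2 * (p.2 j * u p * pdx j u p)) = 0 := by
    rw [← setIntegral_Qc_mul_pdx_mul_eq_zero hr hU hQ hu (hcoord.contDiffOn.mul hu) hu0
      (w := fun _ => 1) (j := j) measurable_const (C := 1) (by simp) (by simp)]
    refine setIntegral_congr_fun measurableSet_Qc fun p hp => ?_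
    have hdiff := (hu.contDiffAt (hU.mem_nhds (hQ (subset_closure hp)))).differentiableAt
      one_ne_zero
    rw [pdx_mul j (hcoord.differentiable one_ne_zero p) hdiff, pdx_coord_self]
    ring
  have hu_cont := hu.continuousOn.mono hQ
  have hux_cont := (continuousOn_pdx hU hu j).mono hQ
  have hu_int : IntegrableOn (fun p => (u p) ^ 2) (Qc d r) := integrableOn_Qc hr (hu_cont.pow 2)
  have hux_int : IntegrableOn (fun p => (pdx j u p) ^ 2) (Qc d r) :=
    integrableOn_Qc hr (hux_cont.pow 2)
  have hyoung : ∫ p in Qc d r, (1 / 2 * (u p) ^ 2 - 2 * r ^ 2 * (pdx j u p) ^ 2) ≤ 0 := by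
    rw [← hdiv]
    refine setIntegral_mono_on ((hu_int.const_mul _).sub (hux_int.const_mul _))
      (integrableOn_Qc hr (by fun_prop)) measurableSet_Qc fun p hp => ?_
    have hx := sq_apply_le_of_mem_closedBallE (ballE_subset_closedBallE hp.2) j
    nlinarith [sq_nonneg (u p + 2 * (p.2 j * pdx j u p)),
      mul_le_mul_of_nonneg_right hx (sq_nonneg (pdx j u p))]
  rw [integral_sub (hu_int.const_mul _) (hux_int.const_mul _), integral_const_mul,
    integral_const_mul] at hyoung
  linarith

lemma integrableOn_sum_sq_pdx (hr : 0 < r) (hU : IsOpen U) (hQ : closure (Qc d r) ⊆ U)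
    (hu : ContDiffOn ℝ 1 u U) : IntegrableOn (fun p => ∑ j, (pdx j u p) ^ 2) (Qc d r) :=
  integrableOn_Qc hr (continuousOn_finsetSum _ fun j _ =>
    ((continuousOn_pdx hU hu j).mono hQ).pow 2)

lemma poincare_Qc_gradient (hr : 0 < r) (hU : IsOpen U) (hQ : closure (Qc d r) ⊆ U)
    (hu : ContDiffOn ℝ 1 u U) (hu0 : ∀ p ∈ Icc 0 (r ^ 2) ×ˢ sphereE d r, u p = 0) (j : Fin d) :
    ∫ p in Qc d r, (u p) ^ 2 ≤ 4 * r ^ 2 * ∫ p in Qc d r, ∑ k, (pdx k u p) ^ 2 := by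
  refine (poincare_Qc hr hU hQ hu hu0 j).trans ?_
  gcongr ?_ * ?_
  refine setIntegral_mono_on (integrableOn_Qc hr (((continuousOn_pdx hU hu j).mono hQ).pow 2))
    (integrableOn_sum_sq_pdx hr hU hQ hu) measurableSet_Qc fun p _ => ?_
  exact Finset.single_le_sum (f := fun k => (pdx k u p) ^ 2) (fun _ _ => sq_nonneg _)
    (Finset.mem_univ j)

end Poincare

/-- Symmetric coefficients with ellipticity constant `δ`; the upper bound is `δ⁻¹`. -/
structure IsUniformlyElliptic {d : ℕ} (δ : ℝ) (b : Fin d → Fin d → ℝ) : Prop where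
  symm : ∀ j k, b j k = b k j
  le_form : ∀ θ : Fin d → ℝ, δ * ∑ j, (θ j) ^ 2 ≤ ∑ j, ∑ k, b j k * θ j * θ k
  form_le : ∀ θ : Fin d → ℝ, ∑ j, ∑ k, b j k * θ j * θ k ≤ δ⁻¹ * ∑ j, (θ j) ^ 2

namespace IsUniformlyElliptic

variable {d : ℕ} {δ : ℝ} {b : Fin d → Fin d → ℝ}

lemma le_diag (hb : IsUniformlyElliptic δ b) (j : Fin d) : δ ≤ b j j := by
  simpa [Pi.single_apply, ite_pow] using hb.le_form (Pi.single j 1)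

lemma diag_le (hb : IsUniformlyElliptic δ b) (j : Fin d) : b j j ≤ δ⁻¹ := by
  simpa [Pi.single_apply, ite_pow] using hb.form_le (Pi.single j 1)

lemma abs_le (hb : IsUniformlyElliptic δ b) (hδ : 0 < δ) (j k : Fin d) : |b j k| ≤ δ⁻¹ := by
  have hform (ε : ℝ) : 0 ≤ b j j + ε * (b j k + b k j) + ε ^ 2 * b k k := by
    have hθ := (mul_nonneg hδ.le (Finset.sum_nonneg fun _ _ => sq_nonneg _)).trans
      (hb.le_form (Pi.single j 1 + ε • Pi.single k 1))
    have hexpand : ∑ i, ∑ l, b i l * (Pi.single j 1 + ε • Pi.single k 1 : Fin d → ℝ) i *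
        (Pi.single j 1 + ε • Pi.single k 1 : Fin d → ℝ) l =
        b j j + ε * (b j k + b k j) + ε ^ 2 * b k k := by
      simp only [Pi.add_apply, Pi.single_apply, Pi.smul_apply, smul_eq_mul, mul_ite, mul_one,
        mul_zero, mul_add, add_mul, ite_mul, zero_mul, Finset.sum_add_distrib,
        Finset.sum_ite_eq', Finset.mem_univ, ↓reduceIte]
      ring
    rwa [hexpand] at hθ
  have hsymm := hb.symm k j
  rw [_root_.abs_le]
  constructor <;> linarith [hform 1, hform (-1), hb.diag_le j, hb.diag_le k]

lemma diag_pos (hb : IsUniformlyElliptic δ b) (hδ : 0 < δ) (j : Fin d) : 0 < b j j :=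
  hδ.trans_le (hb.le_diag j)

lemma abs_inv_diag_le (hb : IsUniformlyElliptic δ b) (hδ : 0 < δ) (j : Fin d) :
    |(b j j)⁻¹| ≤ δ⁻¹ := by
  rw [abs_of_pos (inv_pos.2 (hb.diag_pos hδ j))]
  exact inv_anti₀ hδ (hb.le_diag j)

lemma le_inv_diag (hb : IsUniformlyElliptic δ b) (hδ : 0 < δ) (j : Fin d) : δ ≤ (b j j)⁻¹ :=
  le_inv_of_le_inv₀ (hb.diag_pos hδ j) (hb.diag_le j)

end IsUniformlyElliptic

/-- The operator `L₀ u = u_t + ∑ a^{jk}(xⁱ) u_{x^j x^k}`, whose coefficients depend on the single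
coordinate `xⁱ`. -/
noncomputable def parabolicOp {d : ℕ} (a : ℝ → Fin d → Fin d → ℝ) (i : Fin d)
    (u : ℝ × (Fin d → ℝ) → ℝ) : ℝ × (Fin d → ℝ) → ℝ :=
  fun p => pdt u p + ∑ j, ∑ k, a (p.2 i) j k * pdxx j k u p

/-- The density `a^{ii}(xⁱ)⁻¹ (u L₀u + ∑ a^{jk}(xⁱ) u_{x^j} u_{x^k})` of the energy identity
obtained by testing `L₀u` against `u / a^{ii}`. -/
noncomputable def energyDensity {d : ℕ} (a : ℝ → Fin d → Fin d → ℝ) (i : Fin d)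
    (u : ℝ × (Fin d → ℝ) → ℝ) : ℝ × (Fin d → ℝ) → ℝ :=
  fun p => (a (p.2 i) i i)⁻¹ *
    (u p * parabolicOp a i u p + ∑ j, ∑ k, a (p.2 i) j k * pdx j u p * pdx k u p)

/-- The coefficient `a^{jk} / a^{ii}`. Its `(i, i)` entry is the constant `1`, which is what makes
integration by parts in the direction `xⁱ` possible for merely measurable `a`. -/
noncomputable def normalizedCoeff {d : ℕ} (a : ℝ → Fin d → Fin d → ℝ) (i j k : Fin d) (s : ℝ) : ℝ :=
  (a s i i)⁻¹ * a s j k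

section Energy

variable {d : ℕ} {r δ : ℝ} {a : ℝ → Fin d → Fin d → ℝ} {i : Fin d}
  {u : ℝ × (Fin d → ℝ) → ℝ} {U : Set (ℝ × (Fin d → ℝ))}

lemma measurable_normalizedCoeff (ham : ∀ j k, Measurable fun s => a s j k) (i j k : Fin d) :
    Measurable (normalizedCoeff a i j k) :=
  (ham i i).inv.mul (ham j k)

lemma abs_normalizedCoeff_le (hδ : 0 < δ) (hae : ∀ s, IsUniformlyElliptic δ (a s))
    (i j k : Fin d) (s : ℝ) : |normalizedCoeff a i j k s| ≤ δ⁻¹ * δ⁻¹ := by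
  rw [normalizedCoeff, abs_mul]
  exact mul_le_mul ((hae s).abs_inv_diag_le hδ i) ((hae s).abs_le hδ j k) (abs_nonneg _)
    (inv_pos.2 hδ).le

lemma normalizedCoeff_self (hδ : 0 < δ) (hae : ∀ s, IsUniformlyElliptic δ (a s)) (s : ℝ) :
    normalizedCoeff a i i i s = 1 :=
  inv_mul_cancel₀ ((hae s).diag_pos hδ i).ne'

lemma energyDensity_eq (p : ℝ × (Fin d → ℝ)) :
    energyDensity a i u p = (a (p.2 i) i i)⁻¹ * (u p * pdt u p) +
      ∑ j, ∑ k, normalizedCoeff a i j k (p.2 i) *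
        (u p * pdxx j k u p + pdx k u p * pdx j u p) := by
  have hsum : ∑ j, ∑ k, normalizedCoeff a i j k (p.2 i) *
      (u p * pdxx j k u p + pdx k u p * pdx j u p) =
      (a (p.2 i) i i)⁻¹ * (u p * ∑ j, ∑ k, a (p.2 i) j k * pdxx j k u p) +
        (a (p.2 i) i i)⁻¹ * ∑ j, ∑ k, a (p.2 i) j k * pdx j u p * pdx k u p := by
    simp only [normalizedCoeff, Finset.mul_sum, ← Finset.sum_add_distrib]
    exact Finset.sum_congr rfl fun j _ => Finset.sum_congr rfl fun k _ => by ring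
  rw [hsum, energyDensity, parabolicOp]
  ring

lemma integrableOn_inv_diag_mul_pdt (hr : 0 < r) (hU : IsOpen U) (hQ : closure (Qc d r) ⊆ U)
    (hu : ContDiffOn ℝ 1 u U) (ham : Measurable fun s => a s i i) (hδ : 0 < δ)
    (hae : ∀ s, IsUniformlyElliptic δ (a s)) :
    IntegrableOn (fun p => (a (p.2 i) i i)⁻¹ * (u p * pdt u p)) (Qc d r) :=
  integrableOn_bdd_mul_Qc hr (ham.inv.comp (measurable_pi_apply i))
    (fun x => (hae (x i)).abs_inv_diag_le hδ i)
    ((hu.continuousOn.mul (continuousOn_pdt hU hu)).mono hQ)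

lemma integrableOn_normalizedCoeff_mul_pdxx (hr : 0 < r) (hU : IsOpen U)
    (hQ : closure (Qc d r) ⊆ U) (hu : ContDiffOn ℝ 2 u U)
    (ham : ∀ j k, Measurable fun s => a s j k) (hδ : 0 < δ)
    (hae : ∀ s, IsUniformlyElliptic δ (a s)) (j k : Fin d) :
    IntegrableOn (fun p => normalizedCoeff a i j k (p.2 i) *
      (u p * pdxx j k u p + pdx k u p * pdx j u p)) (Qc d r) := by
  have hux := continuousOn_pdx hU (hu.of_le one_le_two)
  exact integrableOn_bdd_mul_Qc hr
    ((measurable_normalizedCoeff ham i j k).comp (measurable_pi_apply i))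
    (fun x => abs_normalizedCoeff_le hδ hae i j k (x i))
    (((hu.continuousOn.mul (continuousOn_pdxx hU hu j k)).add ((hux k).mul (hux j))).mono hQ)

lemma integrableOn_energyDensity (hr : 0 < r) (hU : IsOpen U) (hQ : closure (Qc d r) ⊆ U)
    (hu : ContDiffOn ℝ 2 u U) (ham : ∀ j k, Measurable fun s => a s j k) (hδ : 0 < δ)
    (hae : ∀ s, IsUniformlyElliptic δ (a s)) :
    IntegrableOn (energyDensity a i u) (Qc d r) := by
  rw [funext energyDensity_eq]
  exact (integrableOn_inv_diag_mul_pdt hr hU hQ (hu.of_le one_le_two) (ham i i) hδ hae).add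
    (integrable_finsetSum _ fun j _ => integrable_finsetSum _ fun k _ =>
      integrableOn_normalizedCoeff_mul_pdxx hr hU hQ hu ham hδ hae j k)

lemma memLp_parabolicOp (hr : 0 < r) (hU : IsOpen U) (hQ : closure (Qc d r) ⊆ U)
    (hu : ContDiffOn ℝ 2 u U) (ham : ∀ j k, Measurable fun s => a s j k) {C : ℝ}
    (haC : ∀ s j k, |a s j k| ≤ C) (q : ENNReal) :
    MemLp (parabolicOp a i u) q (volume.restrict (Qc d r)) := by
  have hut : MemLp (pdt u) q (volume.restrict (Qc d r)) := by
    simpa using memLp_bdd_mul_Qc hr (w := fun _ => 1) measurable_const (C := 1) (by simp)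
      ((continuousOn_pdt hU (hu.of_le one_le_two)).mono hQ) q
  exact hut.add (memLp_finsetSum _ fun j _ => memLp_finsetSum _ fun k _ =>
    memLp_bdd_mul_Qc hr ((ham j k).comp (measurable_pi_apply i)) (fun x => haC (x i) j k)
      ((continuousOn_pdxx hU hu j k).mono hQ) q)

/- If `j ≠ i`, the weight does not involve `x^j` and one integrates by parts in `x^j`; if
`j = i ≠ k`, the symmetry `u_{jk} = u_{kj}` allows integrating by parts in `x^k` instead. -/
lemma setIntegral_Qc_mul_pdxx_eq_zero (hr : 0 < r) (hU : IsOpen U) (hQ : closure (Qc d r) ⊆ U)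
    (hu : ContDiffOn ℝ 2 u U) (hu0 : ∀ p ∈ Icc 0 (r ^ 2) ×ˢ sphereE d r, u p = 0)
    {c : ℝ → ℝ} (hcm : Measurable c) {C : ℝ} (hcC : ∀ s, |c s| ≤ C) {j k : Fin d}
    (hc : j = i → k = i → ∀ s t, c s = c t) :
    ∫ p in Qc d r, c (p.2 i) * (u p * pdxx j k u p + pdx k u p * pdx j u p) = 0 := by
  have byParts (j k : Fin d) (hcj : ∀ (x : Fin d → ℝ) s, c (update x j s i) = c (x i)) :
      ∫ p in Qc d r, c (p.2 i) * (u p * pdxx j k u p + pdx k u p * pdx j u p) = 0 :=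
    setIntegral_Qc_mul_pdx_mul_eq_zero hr hU hQ (hu.of_le one_le_two)
      (contDiffOn_pdx hU hu (by norm_num) k) hu0 (w := fun x => c (x i))
      (hcm.comp (measurable_pi_apply i)) (fun x => hcC (x i)) hcj
  by_cases hj : j = i
  swap
  · exact byParts j k fun x s => by rw [update_of_ne (Ne.symm hj)]
  by_cases hk : k = i
  · exact byParts j k fun x s => hc hj hk _ _
  rw [← byParts k j fun x s => by rw [update_of_ne (Ne.symm hk)]]
  refine setIntegral_congr_fun measurableSet_Qc fun p hp => ?_
  rw [pdxx_comm (hu.contDiffAt (hU.mem_nhds (hQ (subset_closure hp)))) j k,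
    mul_comm (pdx k u p)]

lemma setIntegral_energyDensity_nonpos (hr : 0 < r) (hU : IsOpen U) (hQ : closure (Qc d r) ⊆ U)
    (hu : ContDiffOn ℝ 2 u U) (hu0 : ∀ p ∈ pbQc d r, u p = 0)
    (ham : ∀ j k, Measurable fun s => a s j k) (hδ : 0 < δ)
    (hae : ∀ s, IsUniformlyElliptic δ (a s)) :
    ∫ p in Qc d r, energyDensity a i u p ≤ 0 := by
  have hu1 := hu.of_le one_le_two
  have time_nonpos : ∫ p in Qc d r, (a (p.2 i) i i)⁻¹ * (u p * pdt u p) ≤ 0 :=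
    setIntegral_Qc_mul_self_mul_pdt_nonpos hr hU hQ hu1 (fun x hx => hu0 _ (.inr ⟨rfl, hx⟩))
      ((ham i i).inv.comp (measurable_pi_apply i)) (fun x => (hae (x i)).abs_inv_diag_le hδ i)
      (fun x => (inv_pos.2 ((hae (x i)).diag_pos hδ i)).le)
  have space_eq_zero (j k : Fin d) : ∫ p in Qc d r, normalizedCoeff a i j k (p.2 i) *
      (u p * pdxx j k u p + pdx k u p * pdx j u p) = 0 := by
    refine setIntegral_Qc_mul_pdxx_eq_zero hr hU hQ hu (fun p hp => hu0 p (.inl hp))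
      (measurable_normalizedCoeff ham i j k) (abs_normalizedCoeff_le hδ hae i j k) ?_
    rintro rfl rfl s t
    rw [normalizedCoeff_self hδ hae, normalizedCoeff_self hδ hae]
  have space_int := integrableOn_normalizedCoeff_mul_pdxx hr hU hQ hu ham hδ hae (i := i)
  have space_int_sum (j : Fin d) := integrable_finsetSum Finset.univ fun k _ => space_int j k
  simp_rw [energyDensity_eq]
  rw [integral_add (integrableOn_inv_diag_mul_pdt hr hU hQ hu1 (ham i i) hδ hae)
      (integrable_finsetSum _ fun j _ => space_int_sum j),
    integral_finsetSum _ fun j _ => space_int_sum j]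
  simp_rw [integral_finsetSum _ fun k _ => space_int _ k, space_eq_zero, Finset.sum_const_zero]
  rwa [add_zero]

lemma neg_young_le_mul {w δ ε : ℝ} (hε : 0 < ε) (hw : |w| ≤ δ⁻¹) (y f : ℝ) :
    -(ε * y ^ 2 + (4 * ε * δ ^ 2)⁻¹ * f ^ 2) ≤ w * (y * f) := by
  have hw_sq : w ^ 2 ≤ (δ ^ 2)⁻¹ := by
    rw [← inv_pow, ← sq_abs]
    gcongr
  have hsquare : ε * y ^ 2 + w * (y * f) + w ^ 2 * ((4 * ε)⁻¹ * f ^ 2) =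
      ε * (y + w * f / (2 * ε)) ^ 2 := by
    field_simp
    ring
  have hsquare_nonneg : 0 ≤ ε * (y + w * f / (2 * ε)) ^ 2 := by positivity
  have hcoeff := mul_le_mul_of_nonneg_right hw_sq (by positivity : 0 ≤ (4 * ε)⁻¹ * f ^ 2)
  rw [mul_inv (4 * ε)]
  linarith

lemma le_energyDensity {ε : ℝ} (hδ : 0 < δ) (hε : 0 < ε) (hae : ∀ s, IsUniformlyElliptic δ (a s))
    (p : ℝ × (Fin d → ℝ)) :
    δ ^ 2 * ∑ j, (pdx j u p) ^ 2 -
        (ε * (u p) ^ 2 + (4 * ε * δ ^ 2)⁻¹ * (parabolicOp a i u p) ^ 2) ≤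
      energyDensity a i u p := by
  have hp := hae (p.2 i)
  have hform : δ * (δ * ∑ j, (pdx j u p) ^ 2) ≤
      (a (p.2 i) i i)⁻¹ * ∑ j, ∑ k, a (p.2 i) j k * pdx j u p * pdx k u p :=
    mul_le_mul (hp.le_inv_diag hδ i) (hp.le_form fun j => pdx j u p) (by positivity)
      (inv_pos.2 (hp.diag_pos hδ i)).le
  have hyoung := neg_young_le_mul hε (hp.abs_inv_diag_le hδ i) (u p) (parabolicOp a i u p)
  rw [energyDensity, mul_add]
  linarith

lemma energy_estimate {ε : ℝ} (hr : 0 < r) (hU : IsOpen U) (hQ : closure (Qc d r) ⊆ U)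
    (hu : ContDiffOn ℝ 2 u U) (hu0 : ∀ p ∈ pbQc d r, u p = 0)
    (ham : ∀ j k, Measurable fun s => a s j k) (hδ : 0 < δ) (hε : 0 < ε)
    (hae : ∀ s, IsUniformlyElliptic δ (a s)) :
    δ ^ 2 * ∫ p in Qc d r, ∑ j, (pdx j u p) ^ 2 ≤
      ε * (∫ p in Qc d r, (u p) ^ 2) +
        (4 * ε * δ ^ 2)⁻¹ * ∫ p in Qc d r, (parabolicOp a i u p) ^ 2 := by
  have hgrad_int := (integrableOn_sum_sq_pdx hr hU hQ (hu.of_le one_le_two)).const_mul (δ ^ 2)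
  have hu_int : IntegrableOn (fun p => ε * (u p) ^ 2) (Qc d r) :=
    (integrableOn_Qc hr ((hu.continuousOn.mono hQ).pow 2)).const_mul ε
  have hop_int := (memLp_parabolicOp hr hU hQ hu ham (fun s => (hae s).abs_le hδ) 2
    (i := i)).integrable_sq.const_mul (4 * ε * δ ^ 2)⁻¹
  have hmono := (setIntegral_mono_on (hgrad_int.sub (hu_int.add hop_int))
    (integrableOn_energyDensity hr hU hQ hu ham hδ hae) measurableSet_Qc
    fun p _ => le_energyDensity hδ hε hae p).trans
      (setIntegral_energyDensity_nonpos hr hU hQ hu hu0 ham hδ hae)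
  rw [integral_sub' hgrad_int (hu_int.add hop_int), sub_nonpos,
    integral_add' hu_int hop_int] at hmono
  simpa only [integral_const_mul] using hmono

lemma gradient_estimate (hr : 0 < r) (hU : IsOpen U) (hQ : closure (Qc d r) ⊆ U)
    (hu : ContDiffOn ℝ 2 u U) (hu0 : ∀ p ∈ pbQc d r, u p = 0)
    (ham : ∀ j k, Measurable fun s => a s j k) (hδ : 0 < δ)
    (hae : ∀ s, IsUniformlyElliptic δ (a s)) :
    ∫ p in Qc d r, ∑ j, (pdx j u p) ^ 2 ≤
      4 / δ ^ 6 * r ^ 2 * ∫ p in Qc d r, (parabolicOp a i u p) ^ 2 := by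
  have hpoincare := poincare_Qc_gradient hr hU hQ (hu.of_le one_le_two)
    (fun p hp => hu0 p (.inl hp)) i
  -- With this `ε`, Poincaré's inequality bounds the `u²` term by half of the left-hand side.
  have henergy := energy_estimate hr hU hQ hu hu0 ham hδ (ε := δ ^ 2 / (8 * r ^ 2))
    (by positivity) hae (i := i)
  set A := ∫ p in Qc d r, ∑ j, (pdx j u p) ^ 2
  set F := ∫ p in Qc d r, (parabolicOp a i u p) ^ 2
  have habsorb : δ ^ 2 / (8 * r ^ 2) * (∫ p in Qc d r, (u p) ^ 2) ≤ δ ^ 2 / 2 * A := by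
    calc _ ≤ δ ^ 2 / (8 * r ^ 2) * (4 * r ^ 2 * A) := by gcongr
      _ = δ ^ 2 / 2 * A := by field_simp; ring
  have hhalf : δ ^ 2 / 2 * A ≤ (4 * (δ ^ 2 / (8 * r ^ 2)) * δ ^ 2)⁻¹ * F := by linarith
  calc A = 2 / δ ^ 2 * (δ ^ 2 / 2 * A) := by field_simp
    _ ≤ 2 / δ ^ 2 * ((4 * (δ ^ 2 / (8 * r ^ 2)) * δ ^ 2)⁻¹ * F) := by gcongr
    _ = 4 / δ ^ 6 * r ^ 2 * F := by field_simp; ring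

end Energy

theorem stmt6_general {d : ℕ} {δ : ℝ} (hδ : 0 < δ) {a : ℝ → Fin d → Fin d → ℝ}
    (ham : ∀ j k, Measurable fun s => a s j k) (hae : ∀ s, IsUniformlyElliptic δ (a s))
    {r : ℝ} (hr : 0 < r) {u : ℝ × (Fin d → ℝ) → ℝ} {U : Set (ℝ × (Fin d → ℝ))} (hU : IsOpen U)
    (hQ : closure (Qc d r) ⊆ U) (hu : ContDiffOn ℝ 2 u U) (hu0 : ∀ p ∈ pbQc d r, u p = 0)
    (i : Fin d) :
    r ^ 2 * (∫ p in Qc d r, ∑ j, (pdx j u p) ^ 2) + (∫ p in Qc d r, (u p) ^ 2) ≤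
      20 / δ ^ 6 * r ^ 4 * ∫ p in Qc d r, (parabolicOp a i u p) ^ 2 := by
  have hpoincare := poincare_Qc_gradient hr hU hQ (hu.of_le one_le_two)
    (fun p hp => hu0 p (.inl hp)) i
  have hgradient := gradient_estimate hr hU hQ hu hu0 ham hδ hae (i := i)
  calc _ ≤ 5 * r ^ 2 * ∫ p in Qc d r, ∑ j, (pdx j u p) ^ 2 := by linarith
    _ ≤ 5 * r ^ 2 * (4 / δ ^ 6 * r ^ 2 * ∫ p in Qc d r, (parabolicOp a i u p) ^ 2) := by gcongr
    _ = 20 / δ ^ 6 * r ^ 4 * ∫ p in Qc d r, (parabolicOp a i u p) ^ 2 := by ring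

theorem stmt6 (d : ℕ) (hd : 0 < d) (δ : ℝ) (hδ : δ ∈ Set.Ioo (0 : ℝ) 1) :
    ∃ N : ℝ, 0 < N ∧
      ∀ a : ℝ → Fin d → Fin d → ℝ,
        (∀ j k, Measurable fun s => a s j k) →
        (∀ s j k, a s j k = a s k j) →
        (∀ (s : ℝ) (θ : Fin d → ℝ),
          δ * ∑ j, (θ j) ^ 2 ≤ ∑ j, ∑ k, a s j k * θ j * θ k ∧
          ∑ j, ∑ k, a s j k * θ j * θ k ≤ δ⁻¹ * ∑ j, (θ j) ^ 2) →
        ∀ r : ℝ, 0 < r →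
          ∀ (u : ℝ × (Fin d → ℝ) → ℝ) (U : Set (ℝ × (Fin d → ℝ))),
            IsOpen U → closure (Qc d r) ⊆ U → ContDiffOn ℝ (⊤ : ℕ∞) u U →
            (∀ p ∈ pbQc d r, u p = 0) →
            r ^ 2 * (∫ p in Qc d r, ∑ j, (pdx j u p) ^ 2)
                + (∫ p in Qc d r, (u p) ^ 2)
              ≤ N * r ^ 4 * ∫ p in Qc d r,
                  (pdt u p + ∑ j, ∑ k, a (p.2 ⟨0, hd⟩) j k * pdxx j k u p) ^ 2 := by
  exact ⟨20 / δ ^ 6, by have := hδ.1; positivity, fun a ham has hae r hr u U hU hQ hu hu0 =>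
    stmt6_general hδ.1 ham (fun s => ⟨has s, fun θ => (hae s θ).1, fun θ => (hae s θ).2⟩) hr hU hQ
      (hu.of_le (WithTop.coe_le_coe.2 (le_top (a := (2 : ℕ∞))))) hu0 ⟨0, hd⟩⟩
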